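/- Let A be a unital simple C*-algebra with a unique tracial state τ, and suppose the additive subgroup E_A of ℝ generated by {(τ⊗Tr)(p) : p a projection in M_n(A), n ≥ 1} is cyclic, i.e. E_A = ℤα for a single real number α > 0. Then F(A) = {1}. -/

import Mathlib

open scoped Matrix ComplexOrder

section CommonDefs

variable (A : Type*) [CStarAlgebra A]

/-- `τ` is a tracial state on the unital C*-algebra `A`. -/
structure IsTracialState (τ : A →ₗ[ℂ] ℂ) : Prop where
  map_one : τ 1 = 1
  nonneg : ∀ a : A, 0 ≤ τ (star a * a)
  tracial : ∀ a b : A, τ (a * b) = τ (b * a)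

/-- `A` is simple: every closed two-sided ideal is trivial. -/
def IsSimpleCStarAlgebra : Prop :=
  ∀ I : TwoSidedIdeal A, IsClosed (I : Set A) → I = ⊥ ∨ I = ⊤

/-- `φ` is a *-isomorphism from `A` onto the corner `p Mₙ(A) p`. -/
def IsCornerIso {n : ℕ} (p : Matrix (Fin n) (Fin n) A)
    (φ : A → Matrix (Fin n) (Fin n) A) : Prop :=
  Function.Injective φ ∧
  (∀ a b : A, φ (a + b) = φ a + φ b) ∧
  (∀ a b : A, φ (a * b) = φ a * φ b) ∧
  (∀ (c : ℂ) (a : A), φ (c • a) = c • φ a) ∧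
  (∀ a : A, φ (star a) = star (φ a)) ∧
  Set.range φ = {x : Matrix (Fin n) (Fin n) A | p * x * p = x}

/-- The fundamental group of a unital simple C*-algebra with unique tracial state `τ`:
the set of values `(τ ⊗ Tr)(p)` over projections `p ∈ Mₙ(A)` whose corner `p Mₙ(A) p`
is *-isomorphic to `A`. -/
def fundamentalGroup (τ : A →ₗ[ℂ] ℂ) : Set ℝ :=
  {t : ℝ | ∃ (n : ℕ) (p : Matrix (Fin n) (Fin n) A), 0 < n ∧
    p * p = p ∧ star p = p ∧ (∃ φ, IsCornerIso A p φ) ∧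
    (∑ i, τ (p i i)) = (t : ℂ)}

end CommonDefs
/-- The set of trace values `(τ ⊗ Tr)(p)` of projections `p ∈ Mₙ(A)`, `n ≥ 1`;
the additive subgroup of `ℝ` it generates is `τ_*(K₀(A))`. -/
def projectionTraces (A : Type*) [CStarAlgebra A] (τ : A →ₗ[ℂ] ℂ) : Set ℝ :=
  {t : ℝ | ∃ (n : ℕ) (p : Matrix (Fin n) (Fin n) A), 0 < n ∧
    p * p = p ∧ star p = p ∧ (∑ i, τ (p i i)) = (t : ℂ)}

section Helpers

theorem aux_norm {A : Type*} [CStarAlgebra A] {ι : Type*} [Fintype ι] (x y : ι → A)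
    (h : ∑ i, x i * y i = 1) :
    ∃ c : A, star c = c ∧ c * (∑ i, x i * star (x i)) * c = 1 := by
  let _ := CStarAlgebra.spectralOrder A
  have _ := CStarAlgebra.spectralOrderedRing A
  set H := ∑ i, x i * star (x i) with hH
  set K := ∑ i, star (y i) * y i with hK
  have hK0 : 0 ≤ K := Finset.sum_nonneg fun i _ => star_mul_self_nonneg _
  have hK1 : K ≤ algebraMap ℝ A ‖K‖ := IsSelfAdjoint.le_algebraMap_norm_self (.of_nonneg hK0)
  obtain ⟨r, hr⟩ : ∃ r : ℝ, r = ‖K‖ + 1 := ⟨_, rfl⟩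
  have hr0 : 0 < r := by rw [hr]; positivity
  have h' : ∑ i, star (y i) * star (x i) = 1 := by
    have := congrArg star h
    simpa [star_sum] using this
  have h1 : 0 ≤ ∑ i, (r • x i - star (y i)) * star (r • x i - star (y i)) :=
    Finset.sum_nonneg fun i _ => mul_star_self_nonneg _
  have h2 : ∑ i, (r • x i - star (y i)) * star (r • x i - star (y i))
      = (r * r) • H - (r + r) • 1 + K := by
    have : ∀ i, (r • x i - star (y i)) * star (r • x i - star (y i))
      = (r * r) • (x i * star (x i)) - r • (x i * y i) - r • (star (y i) * star (x i))
        + star (y i) * y i := by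
      intro i
      simp only [star_sub, star_smul, star_star, star_trivial, sub_mul, mul_sub, smul_mul_assoc,
        mul_smul_comm, mul_smul, smul_sub]
      abel
    simp only [this, Finset.sum_add_distrib, Finset.sum_sub_distrib, ← Finset.smul_sum, h, h']
    rw [add_smul r r (1 : A), ← hH, ← hK]
    abel
  rw [h2] at h1
  have h3 : K ≤ r • (1 : A) := by
    refine hK1.trans ?_
    rw [Algebra.algebraMap_eq_smul_one]
    exact smul_le_smul_of_nonneg_right (by linarith) zero_le_one
  have h4 : r • (1 : A) ≤ (r * r) • H := by
    rw [← sub_nonneg]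
    calc (0 : A) ≤ ((r * r) • H - (r + r) • 1 + K) + (r • 1 - K) := add_nonneg h1 (sub_nonneg.2 h3)
      _ = _ := by rw [add_smul]; abel
  have h5 : r⁻¹ • (1 : A) ≤ H := by
    have := smul_le_smul_of_nonneg_left h4 (show 0 ≤ r⁻¹ * r⁻¹ by positivity)
    rw [smul_smul, smul_smul] at this
    have e1 : r⁻¹ * r⁻¹ * r = r⁻¹ := by field_simp
    have e2 : r⁻¹ * r⁻¹ * (r * r) = 1 := by field_simp
    rwa [e1, e2, one_smul] at this
  have h6 : IsStrictlyPositive H := by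
    refine IsStrictlyPositive.of_le (a := r⁻¹ • (1 : A)) ?_ h5
    refine ⟨smul_nonneg (by positivity) zero_le_one, ?_⟩
    rw [← Algebra.algebraMap_eq_smul_one]
    exact (IsUnit.mk0 r⁻¹ (by positivity)).map _
  refine ⟨H ^ (-(1/2) : ℝ), (IsSelfAdjoint.of_nonneg CFC.rpow_nonneg).star_eq, ?_⟩
  have : H = H ^ (1 : ℝ) := (CFC.rpow_one H h6.nonneg).symm
  nth_rw 2 [this]
  rw [← CFC.rpow_add h6.isUnit, ← CFC.rpow_add h6.isUnit]
  norm_num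
  exact CFC.rpow_zero H h6.nonneg

theorem aux_full {A : Type*} [CStarAlgebra A] (hA : IsSimpleCStarAlgebra A) {n : ℕ}
    (p : Matrix (Fin n) (Fin n) A) (hp : p * p = p) (hp0 : p ≠ 0) :
    ∃ (L : Type) (_ : Fintype L) (u w : L → Fin n → A), (∀ l, u l ᵥ* p = u l) ∧
      ∑ l, ∑ a, u l a * w l a = 1 := by
  let G : Set A := {x | ∃ (L : Type) (_ : Fintype L) (u w : L → Fin n → A),
    (∀ l, u l ᵥ* p = u l) ∧ ∑ l, ∑ a, u l a * w l a = x}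
  have G0 : (0 : A) ∈ G := ⟨Empty, inferInstance, fun _ _ => 0, fun _ _ => 0, by simp, by simp⟩
  have Gadd : ∀ x ∈ G, ∀ y ∈ G, x + y ∈ G := by
    rintro x ⟨L, _, u, w, h1, h2⟩ y ⟨L', _, u', w', h1', h2'⟩
    refine ⟨L ⊕ L', inferInstance, Sum.elim u u', Sum.elim w w', ?_, ?_⟩
    · rintro (l | l) <;> simp [h1, h1']
    · simp [h2, h2']
  have Gl : ∀ x, ∀ y ∈ G, x * y ∈ G := by
    rintro x y ⟨L, _, u, w, h1, h2⟩
    refine ⟨L, inferInstance, fun l a => x * u l a, w, ?_, ?_⟩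
    · intro l
      ext a
      have := congrFun (h1 l) a
      simp only [Matrix.vecMul, dotProduct] at this ⊢
      simp only [mul_assoc, ← Finset.mul_sum, this]
    · simp only [mul_assoc, ← Finset.mul_sum, h2]
  have Gr : ∀ x ∈ G, ∀ y, x * y ∈ G := by
    rintro x ⟨L, _, u, w, h1, h2⟩ y
    refine ⟨L, inferInstance, u, fun l a => w l a * y, h1, ?_⟩
    simp only [← mul_assoc, ← Finset.sum_mul, h2]
  have Gp : ∀ i j, p i j ∈ G := by
    intro i j
    refine ⟨Unit, inferInstance, fun _ => p i, fun _ => Pi.single j 1, ?_, ?_⟩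
    · intro _
      ext b
      exact congrFun (congrFun hp i) b
    · simp [Pi.single_apply]
  let I : TwoSidedIdeal A := TwoSidedIdeal.mk' (closure G) (subset_closure G0)
    (fun hx hy => map_mem_closure₂ continuous_add hx hy Gadd)
    (fun hx => map_mem_closure continuous_neg hx fun y hy => by simpa using Gl (-1) y hy)
    (fun {x y} hy => map_mem_closure (continuous_const_mul x) hy (Gl x))
    (fun {x y} hx => map_mem_closure (f := fun z => z * y) (continuous_mul_const y) hx fun z hz => Gr z hz y)
  have hI : (I : Set A) = closure G := by
    ext x; simp [I]
  have hmem : ∀ x, x ∈ I ↔ x ∈ closure G := fun x => by rw [← hI]; rfl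
  rcases hA I (hI ▸ isClosed_closure) with h | h
  · exfalso
    apply hp0
    ext i j
    have : p i j ∈ I := (hmem _).2 (subset_closure (Gp i j))
    rw [h] at this
    simpa using this
  · have : (1 : A) ∈ closure G := (hmem _).1 (by rw [h]; trivial)
    obtain ⟨x, hx, hd⟩ := Metric.mem_closure_iff.1 this 1 one_pos
    rw [dist_eq_norm] at hd
    have hu : IsUnit x := by
      have := isUnit_one_sub_of_norm_lt_one hd
      simpa using this
    obtain ⟨v, rfl⟩ := hu
    have := Gr _ hx (↑v⁻¹)
    rw [Units.mul_inv] at this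
    exact this

theorem aux_rows {A : Type*} [CStarAlgebra A] (hA : IsSimpleCStarAlgebra A) {n : ℕ}
    (p : Matrix (Fin n) (Fin n) A) (hp : p * p = p) (hp0 : p ≠ 0) :
    ∃ (L : Type) (_ : Fintype L) (u : L → Fin n → A), (∀ l, u l ᵥ* p = u l) ∧
      ∑ l, ∑ a, u l a * star (u l a) = 1 := by
  obtain ⟨L, _, u, w, h1, h2⟩ := aux_full hA p hp hp0
  obtain ⟨c, hc, h⟩ := aux_norm (fun i : L × Fin n => u i.1 i.2) (fun i => w i.1 i.2)
    (by rw [Fintype.sum_prod_type]; exact h2)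
  refine ⟨L, inferInstance, fun l a => c * u l a, ?_, ?_⟩
  · intro l
    ext a
    have := congrFun (h1 l) a
    simp only [Matrix.vecMul, dotProduct] at this ⊢
    simp only [mul_assoc, ← Finset.mul_sum, this]
  · rw [Fintype.sum_prod_type] at h
    rw [← h]
    simp only [star_mul, hc, Finset.mul_sum, Finset.sum_mul, mul_assoc]

/-- traces of projections over arbitrary finite index types -/
theorem aux_mem {A : Type*} [CStarAlgebra A] (τ : A →ₗ[ℂ] ℂ) {ι : Type*} [Fintype ι]
    (p : Matrix ι ι A) (h1 : p * p = p) (h2 : star p = p) (t : ℝ)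
    (ht : ∑ i, τ (p i i) = (t : ℂ)) :
    t ∈ AddSubgroup.closure (projectionTraces A τ) := by
  classical
  rcases isEmpty_or_nonempty ι with h | h
  · have : t = 0 := by simpa using ht.symm
    rw [this]; exact zero_mem _
  · apply AddSubgroup.subset_closure
    let e := Fintype.equivFin ι
    refine ⟨Fintype.card ι, p.submatrix e.symm e.symm, Fintype.card_pos, ?_, ?_, ?_⟩
    · rw [Matrix.submatrix_mul_equiv, h1]
    · rw [Matrix.star_eq_conjTranspose] at h2 ⊢
      rw [Matrix.conjTranspose_submatrix, h2]
    · rw [← ht]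
      exact e.symm.sum_comp (fun i => τ (p i i))

theorem aux_real {A : Type*} [CStarAlgebra A] {τ : A →ₗ[ℂ] ℂ} (hτ : IsTracialState A τ)
    {ι : Type*} [Fintype ι]
    (p : Matrix ι ι A) (h1 : p * p = p) (h2 : star p = p) :
    ∃ t : ℝ, 0 ≤ t ∧ ∑ i, τ (p i i) = (t : ℂ) := by
  have : 0 ≤ ∑ i, τ (p i i) := by
    refine Finset.sum_nonneg fun i _ => ?_
    have : p i i = ∑ k, star (p k i) * p k i := by
      conv_lhs => rw [← h1]; arg 1; rw [← h2]
      rfl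
    rw [this, map_sum]
    exact Finset.sum_nonneg fun k _ => hτ.nonneg _
  rw [Complex.nonneg_iff] at this
  exact ⟨_, this.1, Complex.ext rfl (by simp [← this.2])⟩

end Helpers

/-- if `E_A = τ_*(K₀(A))` is the cyclic group `ℤα` for some `α > 0`,
then the fundamental group of `A` is trivial. -/
theorem fundamentalGroup_eq_one_of_cyclic
    (A : Type*) [CStarAlgebra A]
    (hA : IsSimpleCStarAlgebra A)
    (τ : A →ₗ[ℂ] ℂ) (hτ : IsTracialState A τ)
    (huniq : ∀ σ : A →ₗ[ℂ] ℂ, IsTracialState A σ → σ = τ)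
    (α : ℝ) (hα : 0 < α)
    (hcyc : AddSubgroup.closure (projectionTraces A τ) = AddSubgroup.zmultiples α) :
    fundamentalGroup A τ = {1} := by
  ext t
  simp only [Set.mem_singleton_iff]
  constructor
  swap
  · rintro rfl
    refine ⟨1, 1, one_pos, by simp, by simp, ⟨fun a => Matrix.of fun _ _ => a, ?_, ?_, ?_, ?_, ?_, ?_⟩, ?_⟩
    · intro a b h
      exact congrFun (congrFun h 0) 0
    · intro a b; rfl
    · intro a b; ext i j; simp [Matrix.mul_apply]
    · intro c a; rfl
    · intro a; rfl
    · ext x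
      simp only [Set.mem_range, one_mul, mul_one, Set.mem_setOf_eq, iff_true]
      refine ⟨x 0 0, ?_⟩
      ext i j
      rw [Subsingleton.elim i 0, Subsingleton.elim j 0]
      rfl
    · simp [hτ.map_one]
  rintro ⟨n, p, hn, hp, hps, ⟨φ, hinj, hadd, hmul, hsmul, hstar, hrange⟩, ht⟩
  have hr : ∀ a, p * φ a * p = φ a := fun a => by
    have : φ a ∈ Set.range φ := ⟨a, rfl⟩
    rw [hrange] at this; exact this
  have hφ1 : φ 1 = p := by
    have : p ∈ Set.range φ := by rw [hrange]; simp [hp]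
    obtain ⟨a, ha⟩ := this
    have e1 : φ 1 * p = p := by rw [← ha, ← hmul, one_mul]
    have e2 : φ 1 * p = φ 1 := by
      conv_lhs => rw [← hr 1]
      rw [mul_assoc, hp, hr]
    rw [← e2, e1]
  let Φ : A →ₗ[ℂ] Matrix (Fin n) (Fin n) A := ⟨⟨φ, hadd⟩, hsmul⟩
  have hΦ : ∀ a, Φ a = φ a := fun _ => rfl
  have hp0 : p ≠ 0 := by
    intro h
    have h0 : φ 0 = 0 := map_zero Φ
    have : (1 : A) = 0 := hinj (by rw [hφ1, h, h0])
    have h1 := hτ.map_one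
    rw [this, map_zero] at h1
    exact zero_ne_one h1
  -- t is nonnegative
  have ht0 : 0 ≤ t := by
    obtain ⟨s, hs, hs'⟩ := aux_real hτ p hp hps
    rw [ht] at hs'
    have : t = s := by exact_mod_cast hs'
    rw [this]; exact hs
  -- the pulled back trace
  let σ : A →ₗ[ℂ] ℂ := ∑ i, τ ∘ₗ (LinearMap.proj i ∘ₗ (LinearMap.proj i :
    (Fin n → Fin n → A) →ₗ[ℂ] (Fin n → A))) ∘ₗ (Φ : A →ₗ[ℂ] (Fin n → Fin n → A))
  have hσ : ∀ a, σ a = ∑ i, τ (φ a i i) := by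
    intro a
    simp only [σ, LinearMap.sum_apply]
    rfl
  have hne : (1 + t : ℂ) ≠ 0 := by
    have : (1 + t : ℝ) ≠ 0 := by positivity
    exact_mod_cast this
  have hσt : ∀ a, ∑ i, τ (φ a i i) = t * τ a := by
    have key := huniq ((1 + t : ℂ)⁻¹ • (τ + σ)) ?_
    · intro a
      have := LinearMap.congr_fun key a
      simp only [LinearMap.smul_apply, LinearMap.add_apply, smul_eq_mul, hσ] at this
      rw [inv_mul_eq_iff_eq_mul₀ hne] at this
      linear_combination this
    · refine ⟨?_, ?_, ?_⟩
      · simp only [LinearMap.smul_apply, LinearMap.add_apply, smul_eq_mul, hσ, hφ1, ht, hτ.map_one]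
        exact inv_mul_cancel₀ hne
      · intro a
        simp only [LinearMap.smul_apply, LinearMap.add_apply, smul_eq_mul, hσ]
        refine mul_nonneg ?_ (add_nonneg (hτ.nonneg a) (Finset.sum_nonneg fun i _ => ?_))
        · have : (0 : ℝ) ≤ (1 + t)⁻¹ := by positivity
          exact_mod_cast this
        · rw [hmul, hstar, Matrix.mul_apply, map_sum]
          exact Finset.sum_nonneg fun k _ => hτ.nonneg _
      · intro a b
        simp only [LinearMap.smul_apply, LinearMap.add_apply, smul_eq_mul, hσ]
        rw [hτ.tracial a b, hmul, hmul]
        simp only [Matrix.mul_apply, map_sum]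
        rw [Finset.sum_comm]
        simp only [hτ.tracial]
  have hφsum : ∀ {ι : Type} (s : Finset ι) (f : ι → A), φ (∑ i ∈ s, f i) = ∑ i ∈ s, φ (f i) :=
    fun s f => map_sum Φ f s
  -- t E ⊆ E
  have hE1 : ∀ x ∈ AddSubgroup.closure (projectionTraces A τ),
      t * x ∈ AddSubgroup.closure (projectionTraces A τ) := by
    intro x hx
    induction hx using AddSubgroup.closure_induction with
    | zero => simp
    | add x y _ _ hx hy => rw [mul_add]; exact add_mem hx hy
    | neg x _ hx => rw [mul_neg]; exact neg_mem hx
    | mem x hx =>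
      obtain ⟨m, q, hm, hq, hqs, hqt⟩ := hx
      refine aux_mem τ (ι := Fin m × Fin n)
        (Matrix.of fun a b => φ (q a.1 b.1) a.2 b.2) ?_ ?_ _ ?_
      · ext ⟨i, a⟩ ⟨j, b⟩
        have h := congrFun (congrFun hq i) j
        rw [Matrix.mul_apply] at h
        have h := congrArg φ h
        rw [hφsum] at h
        simp only [hmul] at h
        have h := congrFun (congrFun h a) b
        rw [Matrix.sum_apply] at h
        simp only [Matrix.mul_apply, Fintype.sum_prod_type, Matrix.of_apply] at h ⊢
        exact h
      · ext ⟨i, a⟩ ⟨j, b⟩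
        have h := congrFun (congrFun hqs i) j
        have h := congrArg φ h
        rw [Matrix.star_apply, hstar] at h
        exact congrFun (congrFun h a) b
      · rw [Fintype.sum_prod_type]
        simp only [Matrix.of_apply, hσt]
        rw [← Finset.mul_sum, hqt]
        push_cast; rfl
  -- E ⊆ t E
  obtain ⟨L, _, u, hu1, hu2⟩ := aux_rows hA p hp hp0
  have hE2 : ∀ x ∈ AddSubgroup.closure (projectionTraces A τ),
      ∃ y ∈ AddSubgroup.closure (projectionTraces A τ), x = t * y := by
    intro x hx
    induction hx using AddSubgroup.closure_induction with
    | zero => exact ⟨0, zero_mem _, by simp⟩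
    | add x y _ _ hx hy =>
      obtain ⟨x', h1, rfl⟩ := hx
      obtain ⟨y', h2, rfl⟩ := hy
      exact ⟨x' + y', add_mem h1 h2, by ring⟩
    | neg x _ hx =>
      obtain ⟨x', h1, rfl⟩ := hx
      exact ⟨-x', neg_mem h1, by ring⟩
    | mem x hx =>
      obtain ⟨m, q, hm, hq, hqs, hqt⟩ := hx
      have hu1' : ∀ l b, ∑ a, u l a * p a b = u l b := fun l b => congrFun (hu1 l) b
      have hu1'' : ∀ l b, ∑ a, p b a * star (u l a) = star (u l b) := by
        intro l b
        rw [← hu1' l b, star_sum]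
        refine Finset.sum_congr rfl fun a _ => ?_
        rw [star_mul]
        congr 1
        exact (congrFun (congrFun hps b) a).symm
      have hex : ∀ (a b : Fin m × L), ∃ r : A,
          φ r = Matrix.of fun c d => star (u a.2 c) * q a.1 b.1 * u b.2 d := by
        intro a b
        have : (Matrix.of fun c d => star (u a.2 c) * q a.1 b.1 * u b.2 d) ∈ Set.range φ := by
          rw [hrange]
          ext c d
          simp only [Matrix.mul_apply, Matrix.of_apply]
          simp only [← mul_assoc, ← Finset.sum_mul, hu1'']
          simp only [mul_assoc, ← Finset.mul_sum, hu1']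
        exact this
      choose r hrr using hex
      have hrp : Matrix.of r * Matrix.of r = Matrix.of r := by
        ext a b
        apply hinj
        rw [Matrix.mul_apply, hφsum]
        simp only [hmul, Matrix.of_apply, hrr]
        ext c d
        rw [Matrix.sum_apply]
        simp only [Matrix.mul_apply, Matrix.of_apply, Fintype.sum_prod_type]
        have e : ∀ (i : Fin m) (l : L) (k : Fin n),
          star (u a.2 c) * q a.1 i * u l k * (star (u l k) * q i b.1 * u b.2 d)
            = (star (u a.2 c) * q a.1 i) * (u l k * star (u l k)) * (q i b.1 * u b.2 d) := by
          intros; simp only [mul_assoc]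
        simp only [e, ← Finset.sum_mul, ← Finset.mul_sum, hu2, mul_one]
        have h := congrFun (congrFun hq a.1) b.1
        rw [Matrix.mul_apply] at h
        rw [← h, Finset.mul_sum, Finset.sum_mul]
        simp only [mul_assoc]
      have hrs : star (Matrix.of r) = Matrix.of r := by
        ext a b
        apply hinj
        rw [Matrix.star_apply, hstar]
        simp only [Matrix.of_apply, hrr]
        ext c d
        have h : star (q b.1 a.1) = q a.1 b.1 := congrFun (congrFun hqs a.1) b.1
        simp only [Matrix.star_apply, Matrix.of_apply, star_mul, star_star, h, mul_assoc]
      obtain ⟨y, -, hy⟩ := aux_real hτ (Matrix.of r) hrp hrs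
      refine ⟨y, aux_mem τ _ hrp hrs y hy, ?_⟩
      have : (x : ℂ) = t * y := by
        rw [← hy, ← hqt, Finset.mul_sum]
        simp only [Matrix.of_apply, ← hσt, hrr, Fintype.sum_prod_type]
        refine Finset.sum_congr rfl fun i _ => ?_
        have e : ∀ l c, τ (star (u l c) * q i i * u l c) = τ (q i i * (u l c * star (u l c))) := by
          intro l c
          rw [mul_assoc, hτ.tracial, mul_assoc]
        simp only [e, ← map_sum, ← Finset.mul_sum, hu2, mul_one]
      exact_mod_cast this
  have hαE : α ∈ AddSubgroup.closure (projectionTraces A τ) := by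
    rw [hcyc]; exact AddSubgroup.mem_zmultiples α
  have h1 := hE1 α hαE
  obtain ⟨y, hy, h2⟩ := hE2 α hαE
  rw [hcyc, AddSubgroup.mem_zmultiples_iff] at h1 hy
  obtain ⟨m, hm⟩ := h1
  obtain ⟨k, rfl⟩ := hy
  rw [zsmul_eq_mul] at hm h2
  have htm : (m : ℝ) = t := mul_right_cancel₀ hα.ne' hm
  have hmk : (m : ℝ) * k = 1 := by
    apply mul_right_cancel₀ hα.ne'
    rw [htm, mul_assoc, ← h2, one_mul]
  have hmk' : m * k = 1 := by exact_mod_cast hmk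
  have hm0 : 0 ≤ m := by rw [← htm] at ht0; exact_mod_cast ht0
  rw [← htm, Int.eq_one_of_mul_eq_one_right hm0 hmk']
  simp
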